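/- Let n ≥ 3 be an integer, σ > 0, and let φ_{(1,2)},…,φ_{(n−1,n)}: ℝ → ℝ be continuous functions satisfying φ_{(i,i+1)}(s) ≥ σ for all s ∈ ℝ and 1 ≤ i ≤ n−1, and suppose there exist positive constants ρ̄_i, ρ̲_i such that ρ̄_i φ_{(i−1,i)}(s) ≤ φ_{(i,i+1)}(s) ≤ ρ̲_i φ_{(i−1,i)}(s) for all s ∈ ℝ and 3 ≤ i ≤ n−1. Then there exist a symmetric positive-definite real (n−1)×(n−1) matrix P_c, positive constants ν_c, ν̲_c, ν̄_c, and continuous functions k₂,…,k_n: ℝ → ℝ such that for all s ∈ ℝ: (i) P_c A_c(s) + A_c(s)ᵀ P_c ⪯ −ν_c φ_{(2,3)}(s) I_{n−1} (in the Loewner order); and (ii) ν̲_c I_{n−1} ⪯ P_c D̃_c + D̃_c P_c ⪯ ν̄_c I_{n−1}. -/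

import Mathlib

/-!
The closed loop is a chain `x_j' = f_j(s) x_{j+1}` (`0 ≤ j < N`, `N = n - 1`) whose last link
`x_N` is the feedback, where `f_j = φ_{(j+2,j+3)}` for `j < N - 1` and the free factor `f_{N-1}`
is set to `f_0 = φ_{(2,3)}`. The ratio hypotheses make every `f_j` comparable with `f_0`, uniformly
in `s`.

The matrix `P` is built by constant-coefficient backstepping. Suppose a form `P` on the
first `m` coordinates and a gain `g` are known, and put `z = x_m + ∑_{i<m} g_i x_i`. The new form is
`P + w z²`. It adds `w (d_m z² + z · r)` to the form `P(x, D̃x)`, where `d_m = m + 1/2` and `r` is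
linear in `x_0, …, x_{m-1}`, so a small `w` keeps the `D̃`-inequality. With `w` fixed, the new gain is `κ (g, 1)`, and a large `κ` dominates all
cross terms in the Lyapunov inequality. The invariant carried along (`backstepping`) is
`P(x, x') ≤ f_0 (-ν ∑_{i<m} x_i² + K z²)` for all `x`, with no feedback imposed on `x_m`; at
`m = N` the feedback makes `z = 0`. `exists_small_weight` and `exists_large_gain` are
the scalar choices of `w` and `κ`.
-/

open Matrix

/-- The controller-context matrix `A_c(s)` (0-based indexing on `Fin (n−1)`): last-row entries
`A_c[n−2][j] = −k_{j+2}(s)`, superdiagonal entries `A_c[i][i+1] = φ_{(i+2,i+3)}(s) = φd (i+1) s`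
(for non-last rows), all other entries zero; `φd i` denotes `φ_{(i+1,i+2)}` and `k` is indexed
as in the paper (`k 2, …, k n`). -/
noncomputable def ctrlMatrix (n : ℕ) (φd : ℕ → ℝ → ℝ) (k : ℕ → ℝ → ℝ) (s : ℝ) :
    Matrix (Fin (n - 1)) (Fin (n - 1)) ℝ :=
  Matrix.of fun i j =>
    if (i : ℕ) = n - 2 then -(k ((j : ℕ) + 2) s)
    else if (j : ℕ) = (i : ℕ) + 1 then φd ((i : ℕ) + 1) s else 0

/-- `D̃ = diag(1,2,…,n−1) − (1/2)I`. -/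
noncomputable def DtildeC (n : ℕ) : Matrix (Fin (n - 1)) (Fin (n - 1)) ℝ :=
  Matrix.diagonal (fun i : Fin (n - 1) => ((i : ℕ) : ℝ) + 1) -
    (2⁻¹ : ℝ) • (1 : Matrix (Fin (n - 1)) (Fin (n - 1)) ℝ)

/-- The bilinear form on the first `m` coordinates of sequences with coefficients `P`. -/
def bilin (P : ℕ → ℕ → ℝ) (m : ℕ) (x y : ℕ → ℝ) : ℝ :=
  ∑ i ∈ Finset.range m, ∑ j ∈ Finset.range m, P i j * x i * y j

/-- The sum of squares of the first `m` coordinates. -/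
def sqSum (m : ℕ) (x : ℕ → ℝ) : ℝ := ∑ i ∈ Finset.range m, x i ^ 2

/-- The linear form `∑_{i<m} g_i x_i`. -/
def lin (g : ℕ → ℝ) (m : ℕ) (x : ℕ → ℝ) : ℝ := ∑ i ∈ Finset.range m, g i * x i

/-- The coefficients of `P + w z²`, where `z = x_m + ∑_{i<m} g_i x_i`. -/
def extend (P : ℕ → ℕ → ℝ) (g : ℕ → ℝ) (w : ℝ) (m : ℕ) (i j : ℕ) : ℝ :=
  (if i < m ∧ j < m then P i j else 0) +
    w * (if i < m then g i else 1) * (if j < m then g j else 1)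

lemma sqSum_nonneg (m : ℕ) (x : ℕ → ℝ) : 0 ≤ sqSum m x :=
  Finset.sum_nonneg fun _ _ => sq_nonneg _

lemma sqSum_succ (m : ℕ) (x : ℕ → ℝ) : sqSum (m + 1) x = sqSum m x + x m ^ 2 :=
  Finset.sum_range_succ _ _

lemma lin_sq_le (g : ℕ → ℝ) (m : ℕ) (x : ℕ → ℝ) :
    lin g m x ^ 2 ≤ sqSum m g * sqSum m x :=
  Finset.sum_mul_sq_le_sq_mul_sq _ _ _

lemma lin_extend (g : ℕ → ℝ) (c : ℝ) (m : ℕ) (x : ℕ → ℝ) :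
    lin (fun i => c * if i < m then g i else 1) (m + 1) x = c * (x m + lin g m x) := by
  unfold lin
  rw [Finset.sum_range_succ, mul_add, add_comm, Finset.mul_sum]
  congr 1
  · simp
  · refine Finset.sum_congr rfl fun i hi => ?_
    simp only [if_pos (Finset.mem_range.1 hi), mul_assoc]

lemma bilin_extend (P : ℕ → ℕ → ℝ) (g : ℕ → ℝ) (w : ℝ) (m : ℕ) (x y : ℕ → ℝ) :
    bilin (extend P g w m) (m + 1) x y =
      bilin P m x y + w * (x m + lin g m x) * (y m + lin g m y) := by
  have hx := lin_extend g 1 m x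
  have hy := lin_extend g 1 m y
  rw [one_mul] at hx hy
  rw [← hx, ← hy]
  have h1 : bilin (extend P g w m) (m + 1) x y =
      (∑ i ∈ Finset.range (m + 1), ∑ j ∈ Finset.range (m + 1),
        (if i < m ∧ j < m then P i j else 0) * x i * y j) +
      w * lin (fun i => 1 * if i < m then g i else 1) (m + 1) x *
        lin (fun i => 1 * if i < m then g i else 1) (m + 1) y := by
    unfold bilin lin
    rw [mul_assoc w, Finset.sum_mul_sum, Finset.mul_sum, ← Finset.sum_add_distrib]
    refine Finset.sum_congr rfl fun i _ => ?_
    rw [Finset.mul_sum, ← Finset.sum_add_distrib]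
    refine Finset.sum_congr rfl fun j _ => ?_
    unfold extend
    ring
  rw [h1]
  congr 1
  unfold bilin
  rw [Finset.sum_range_succ]
  simp only [lt_irrefl, false_and, if_false, zero_mul, Finset.sum_const_zero, add_zero]
  refine Finset.sum_congr rfl fun i hi => ?_
  rw [Finset.sum_range_succ]
  simp only [lt_irrefl, and_false, if_false, zero_mul, add_zero]
  refine Finset.sum_congr rfl fun j hj => ?_
  rw [if_pos ⟨Finset.mem_range.1 hi, Finset.mem_range.1 hj⟩]

/-- The triangular change of coordinates `x_m ↦ z` distorts the square norm by a bounded factor. -/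
lemma sqSum_succ_le (g : ℕ → ℝ) (m : ℕ) (x : ℕ → ℝ) :
    sqSum (m + 1) x ≤ (2 + 2 * sqSum m g) * (sqSum m x + (x m + lin g m x) ^ 2) := by
  rw [sqSum_succ]
  have h := lin_sq_le g m x
  have h1 := sqSum_nonneg m x
  have h2 := mul_nonneg (sqSum_nonneg m g) (sq_nonneg (x m + lin g m x))
  nlinarith [sq_nonneg (x m + lin g m x + lin g m x)]

/-- Choice of `w`: the form `ε S + w z (d z + r)` stays positive, uniformly over remainders `r`
with `r² ≤ R S`. -/
lemma exists_small_weight (ε R : ℝ) (hε : 0 < ε) (hR : 0 ≤ R) :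
    ∃ w : ℝ, 0 < w ∧ ∃ η : ℝ, 0 < η ∧ ∀ S z d r b : ℝ, 0 ≤ S → 1 / 2 ≤ d → r ^ 2 ≤ R * S →
      ε * S ≤ b → η * (S + z ^ 2) ≤ b + w * z * (d * z + r) := by
  refine ⟨ε / (2 * (R + 1)), by positivity, min (ε / 2) (ε / (2 * (R + 1)) / 4),
    by positivity, ?_⟩
  intro S z d r b hS hd hr hb
  set w := ε / (2 * (R + 1)) with hw
  have hw0 : 0 < w := by positivity
  have hwR : w * R ≤ ε / 2 := by
    rw [hw, div_mul_eq_mul_div, div_le_div_iff₀ (by positivity) (by norm_num)]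
    nlinarith
  have h1 := min_le_left (ε / 2) (w / 4)
  have h2 := min_le_right (ε / 2) (w / 4)
  have h3 : -(z ^ 2 / 4 + r ^ 2) ≤ z * r := by nlinarith [sq_nonneg (z / 2 + r)]
  have h4 := mul_le_mul_of_nonneg_left h3 hw0.le
  have h5 := mul_le_mul_of_nonneg_left hr hw0.le
  have h6 := mul_le_mul_of_nonneg_right hwR hS
  have h7 := mul_le_mul_of_nonneg_right h1 hS
  have h8 := mul_le_mul_of_nonneg_right h2 (sq_nonneg z)
  have h9 := mul_le_mul_of_nonneg_left hd (mul_nonneg hw0.le (sq_nonneg z))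
  nlinarith

/-- Choice of `κ`: here `q` is the cross term produced by differentiating `z`, and `z' - κ z` is the
next coordinate of the chain. -/
lemma exists_large_gain (ν K L w c C : ℝ) (hν : 0 < ν) (hK : 0 ≤ K) (hL : 0 ≤ L) (hw : 0 < w)
    (hc : 0 < c) :
    ∃ κ : ℝ, ∀ F S z z' q f b : ℝ, 0 < F → 0 ≤ S → c * F ≤ f → f ≤ C * F →
      q ^ 2 ≤ F ^ 2 * (L * (S + z ^ 2)) → b ≤ F * (-ν * S + K * z ^ 2) →
      b + w * z * (f * (z' - κ * z) + q) ≤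
        F * (-(ν / 2) * (S + z ^ 2) + w * C * z' ^ 2) := by
  -- `δ` is the weight in Young's inequality `w z q ≤ δ q² + w² z² / (4 δ)`, with `δ L ≤ ν / 2`.
  set δ := ν / (2 * (L + 1)) with hδ
  have hδ0 : 0 < δ := by positivity
  have hδL : δ * L ≤ ν / 2 := by
    rw [hδ, div_mul_eq_mul_div, div_le_div_iff₀ (by positivity) (by norm_num)]
    nlinarith
  set T := K + ν + w ^ 2 / (4 * δ) with hT
  have hT0 : 0 ≤ T := by positivity
  refine ⟨1 + T / (c * w), ?_⟩
  intro F S z z' q f b hF hS hcf hfC hq hb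
  obtain ⟨p, rfl⟩ : ∃ p, q = F * p := ⟨q / F, by field_simp⟩
  have hp : p ^ 2 ≤ L * (S + z ^ 2) := by
    rw [mul_pow] at hq
    exact le_of_mul_le_mul_left hq (by positivity)
  have hSz : 0 ≤ S + z ^ 2 := by positivity
  have h1 : w * z * p ≤ δ * p ^ 2 + w ^ 2 / (4 * δ) * z ^ 2 := by
    have : δ * p ^ 2 + w ^ 2 / (4 * δ) * z ^ 2 - w * z * p =
        δ * (p - w * z / (2 * δ)) ^ 2 := by field_simp; ring
    nlinarith [mul_nonneg hδ0.le (sq_nonneg (p - w * z / (2 * δ)))]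
  have h2 : δ * p ^ 2 ≤ ν / 2 * (S + z ^ 2) := by
    nlinarith [mul_le_mul_of_nonneg_left hp hδ0.le, mul_le_mul_of_nonneg_right hδL hSz]
  have hf : 0 < f := lt_of_lt_of_le (by positivity) hcf
  have h3 : z * z' ≤ z ^ 2 + z' ^ 2 := by
    nlinarith [sq_nonneg (z - z'), sq_nonneg z, sq_nonneg z']
  have h4 : w * z * (f * (z' - (1 + T / (c * w)) * z)) ≤
      F * (w * C * z' ^ 2 - T * z ^ 2) := by
    have e1 := mul_le_mul_of_nonneg_left h3 (mul_pos hw hf).le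
    have e2 : w * f * z' ^ 2 ≤ w * (C * F) * z' ^ 2 := by gcongr
    have e3 : w * (c * F) * (T / (c * w)) * z ^ 2 ≤ w * f * (T / (c * w)) * z ^ 2 := by gcongr
    have e4 : w * (c * F) * (T / (c * w)) * z ^ 2 = F * T * z ^ 2 := by field_simp
    nlinarith
  have h5 := mul_le_mul_of_nonneg_left (h1.trans (add_le_add_left h2 _)) hF.le
  have h6 : b + w * z * (f * (z' - (1 + T / (c * w)) * z) + F * p) =
      b + w * z * (f * (z' - (1 + T / (c * w)) * z)) + F * (w * z * p) := by ring
  rw [h6]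
  refine (add_le_add (add_le_add hb h4) h5).trans ?_
  have h7 : F * (-ν * S + K * z ^ 2) + F * (w * C * z' ^ 2 - T * z ^ 2) +
      F * (ν / 2 * (S + z ^ 2) + w ^ 2 / (4 * δ) * z ^ 2) =
      F * (-(ν / 2) * (S + z ^ 2) + w * C * z' ^ 2) := by
    rw [hT]; ring
  exact h7.le

/-- The backstepping invariant on the first `m` coordinates. The vector `j ↦ (j + 1/2) x_j` is
`D̃ x`, and `j ↦ f_j(s) x_{j+1}` is the chain. -/
lemma backstepping (f : ℕ → ℝ → ℝ) (c C : ℕ → ℝ) (hf0 : ∀ s, 0 < f 0 s) (hc : ∀ j, 0 < c j)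
    (hcf : ∀ j s, c j * f 0 s ≤ f j s) (hfC : ∀ j s, f j s ≤ C j * f 0 s) (m : ℕ) :
    ∃ (P : ℕ → ℕ → ℝ) (g : ℕ → ℝ) (ε ν K : ℝ), 0 < ε ∧ 0 < ν ∧ 0 ≤ K ∧
      (∀ i j, P i j = P j i) ∧
      (∀ x, ε * sqSum m x ≤ bilin P m x x) ∧
      (∀ x, ε * sqSum m x ≤ bilin P m x (fun j => ((j : ℝ) + 1 / 2) * x j)) ∧
      (∀ s x, bilin P m x (fun j => f j s * x (j + 1)) ≤
        f 0 s * (-ν * sqSum m x + K * (x m + lin g m x) ^ 2)) := by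
  induction m with
  | zero =>
    exact ⟨fun _ _ => 0, fun _ => 0, 1, 1, 0, one_pos, one_pos, le_rfl, fun _ _ => rfl,
      by simp [bilin, sqSum], by simp [bilin, sqSum], by simp [bilin, sqSum]⟩
  | succ m ih =>
    obtain ⟨P, g, ε, ν, K, hε, hν, hK, hsymm, hpos, hD, hA⟩ := ih
    set M := 2 + 2 * sqSum m g with hM
    have hM0 : 0 < M := by have := sqSum_nonneg m g; positivity
    obtain ⟨w, hw, η, hη, hsmall⟩ := exists_small_weight ε
      (sqSum m fun i => g i * ((i : ℝ) - m)) hε (sqSum_nonneg _ _)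
    set L := (∑ i ∈ Finset.range m, (g i * C i) ^ 2) * M with hL
    have hL0 : 0 ≤ L := mul_nonneg (Finset.sum_nonneg fun _ _ => sq_nonneg _) hM0.le
    obtain ⟨κ, hκ⟩ := exists_large_gain ν K L w (c m) (C m) hν hK hL0 hw (hc m)
    have hCm : 0 ≤ C m := by
      have h1 := (mul_pos (hc m) (hf0 0)).trans_le ((hcf m 0).trans (hfC m 0))
      exact (pos_of_mul_pos_left h1 (hf0 0).le).le
    have hC0 : ∀ i s, 0 ≤ f i s := fun i s => (mul_pos (hc i) (hf0 s)).le.trans (hcf i s)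
    refine ⟨extend P g w m, fun i => κ * if i < m then g i else 1, min ε (min w η) / M,
      ν / 2 / M, w * C m, by positivity, by positivity, by positivity, ?_, ?_, ?_, ?_⟩
    · intro i j
      simp only [extend, hsymm i j, and_comm (a := i < m)]
      ring
    · intro x
      rw [bilin_extend]
      have h1 := sqSum_succ_le g m x
      have hS := sqSum_nonneg m x
      have hz := sq_nonneg (x m + lin g m x)
      have h2 : min ε (min w η) / M * sqSum (m + 1) x ≤
          min ε (min w η) * (sqSum m x + (x m + lin g m x) ^ 2) := by
        rw [div_mul_eq_mul_div, div_le_iff₀ hM0, mul_assoc]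
        refine mul_le_mul_of_nonneg_left ?_ (by positivity)
        linarith
      have h3 := mul_le_mul_of_nonneg_right (min_le_left ε (min w η)) hS
      have h4 := mul_le_mul_of_nonneg_right
        ((min_le_right ε (min w η)).trans (min_le_left w η)) hz
      nlinarith [hpos x]
    · intro x
      rw [bilin_extend]
      have h1 := sqSum_succ_le g m x
      have hS := sqSum_nonneg m x
      have hz := sq_nonneg (x m + lin g m x)
      have h2 : min ε (min w η) / M * sqSum (m + 1) x ≤
          min ε (min w η) * (sqSum m x + (x m + lin g m x) ^ 2) := by
        rw [div_mul_eq_mul_div, div_le_iff₀ hM0, mul_assoc]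
        refine mul_le_mul_of_nonneg_left ?_ (by positivity)
        linarith
      have h3 := mul_le_mul_of_nonneg_right
        ((min_le_right ε (min w η)).trans (min_le_right w η)) (add_nonneg hS hz)
      refine h2.trans (h3.trans ?_)
      have h4 := hsmall (sqSum m x) (x m + lin g m x) ((m : ℝ) + 1 / 2)
        (lin (fun i => g i * ((i : ℝ) - m)) m x) _ hS
        (by have := m.cast_nonneg (α := ℝ); linarith) (lin_sq_le _ _ _) (hD x)
      refine h4.trans (le_of_eq ?_)
      congr 2
      have h5 : lin g m (fun j => ((j : ℝ) + 1 / 2) * x j) =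
          ((m : ℝ) + 1 / 2) * lin g m x + lin (fun i => g i * ((i : ℝ) - m)) m x := by
        unfold lin
        rw [Finset.mul_sum, ← Finset.sum_add_distrib]
        exact Finset.sum_congr rfl fun i _ => by ring
      rw [h5]; ring
    · intro s x
      rw [bilin_extend, lin_extend]
      have h1 := sqSum_succ_le g m x
      have hS := sqSum_nonneg m x
      have hq : lin g m (fun j => f j s * x (j + 1)) ^ 2 ≤
          f 0 s ^ 2 * (L * (sqSum m x + (x m + lin g m x) ^ 2)) := by
        have e1 : lin g m (fun j => f j s * x (j + 1)) =
            ∑ i ∈ Finset.range m, (g i * f i s) * x (i + 1) :=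
          Finset.sum_congr rfl fun i _ => by ring
        have e2 : ∑ i ∈ Finset.range m, (g i * f i s) ^ 2 ≤
            f 0 s ^ 2 * ∑ i ∈ Finset.range m, (g i * C i) ^ 2 := by
          rw [Finset.mul_sum]
          refine Finset.sum_le_sum fun i _ => ?_
          have := pow_le_pow_left₀ (hC0 i s) (hfC i s) 2
          calc (g i * f i s) ^ 2 = g i ^ 2 * f i s ^ 2 := by ring
            _ ≤ g i ^ 2 * (C i * f 0 s) ^ 2 := by gcongr
            _ = _ := by ring
        have e3 : ∑ i ∈ Finset.range m, x (i + 1) ^ 2 ≤ sqSum (m + 1) x := by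
          unfold sqSum
          rw [Finset.sum_range_succ']
          nlinarith [sq_nonneg (x 0)]
        rw [e1]
        calc _ ≤ _ := Finset.sum_mul_sq_le_sq_mul_sq _ _ _
          _ ≤ (f 0 s ^ 2 * ∑ i ∈ Finset.range m, (g i * C i) ^ 2) *
              (M * (sqSum m x + (x m + lin g m x) ^ 2)) := by
            refine mul_le_mul e2 (e3.trans h1)
              (Finset.sum_nonneg fun _ _ => sq_nonneg _)
              (mul_nonneg (sq_nonneg _) (Finset.sum_nonneg fun _ _ => sq_nonneg _))
          _ = _ := by rw [hL]; ring
      have h2 := hκ (f 0 s) (sqSum m x) (x m + lin g m x) (x (m + 1) + κ * (x m + lin g m x))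
        (lin g m (fun j => f j s * x (j + 1))) (f m s) _ (hf0 s) hS (hcf m s) (hfC m s) hq
        (hA s x)
      rw [add_sub_cancel_right] at h2
      refine h2.trans (mul_le_mul_of_nonneg_left ?_ (hf0 s).le)
      have h3 : ν / 2 / M * sqSum (m + 1) x ≤
          ν / 2 * (sqSum m x + (x m + lin g m x) ^ 2) := by
        rw [div_mul_eq_mul_div, div_le_iff₀ hM0, mul_assoc]
        refine mul_le_mul_of_nonneg_left ?_ (by positivity)
        linarith
      linarith

/-- Telescoping the ratio bounds: each factor of the chain is comparable with the first one. -/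
lemma exists_ratio_bounds (n : ℕ) (φd : ℕ → ℝ → ℝ) (ρub ρlb : ℕ → ℝ)
    (hρ : ∀ i, 2 ≤ i → i < n - 1 → 0 < ρub i ∧ 0 < ρlb i ∧
      ∀ s, ρub i * φd (i - 1) s ≤ φd i s ∧ φd i s ≤ ρlb i * φd (i - 1) s) (j : ℕ) :
    ∃ c C : ℝ, 0 < c ∧ 0 < C ∧ (j < n - 2 → ∀ s,
      c * φd 1 s ≤ φd (j + 1) s ∧ φd (j + 1) s ≤ C * φd 1 s) := by
  induction j with
  | zero => exact ⟨1, 1, one_pos, one_pos, fun _ s => by simp⟩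
  | succ j ih =>
    obtain ⟨c, C, hc, hC, h⟩ := ih
    by_cases hj : j + 1 < n - 2
    · obtain ⟨ha, hb, hr⟩ := hρ (j + 1 + 1) (by omega) (by omega)
      refine ⟨ρub (j + 1 + 1) * c, ρlb (j + 1 + 1) * C, by positivity, by positivity,
        fun _ s => ?_⟩
      obtain ⟨u, v⟩ := h (by omega) s
      obtain ⟨u', v'⟩ := hr s
      rw [Nat.add_sub_cancel] at u' v'
      constructor
      · rw [mul_assoc]
        exact (mul_le_mul_of_nonneg_left u ha.le).trans u'
      · rw [mul_assoc]
        exact v'.trans (mul_le_mul_of_nonneg_left v hb.le)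
    · exact ⟨1, 1, one_pos, one_pos, fun h => absurd h hj⟩

lemma dotProduct_eq_bilin (P : ℕ → ℕ → ℝ) (N : ℕ) (x y : ℕ → ℝ) :
    (fun i : Fin N => x i) ⬝ᵥ ((Matrix.of fun i j : Fin N => P i j) *ᵥ fun i : Fin N => y i) =
      bilin P N x y := by
  simp only [dotProduct, mulVec, Matrix.of_apply, bilin, Finset.mul_sum]
  rw [← Fin.sum_univ_eq_sum_range
    (fun i => ∑ j ∈ Finset.range N, P i j * x i * y j)]
  refine Finset.sum_congr rfl fun i _ => ?_
  rw [← Fin.sum_univ_eq_sum_range (fun j => P i j * x i * y j)]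
  exact Finset.sum_congr rfl fun j _ => by ring

lemma dotProduct_self_eq_sqSum (N : ℕ) (x : ℕ → ℝ) :
    (fun i : Fin N => x i) ⬝ᵥ (fun i : Fin N => x i) = sqSum N x := by
  simp only [dotProduct, sqSum]
  rw [← Fin.sum_univ_eq_sum_range (fun i => x i ^ 2)]
  exact Finset.sum_congr rfl fun j _ => by ring

/-- A crude upper bound for a quadratic form by the sum of its absolute coefficients. -/
lemma bilin_le (P : ℕ → ℕ → ℝ) (N : ℕ) (x : ℕ → ℝ) :
    bilin P N x x ≤
      (∑ i ∈ Finset.range N, ∑ j ∈ Finset.range N, |P i j|) * sqSum N x := by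
  unfold bilin
  rw [Finset.sum_mul]
  refine Finset.sum_le_sum fun i hi => ?_
  rw [Finset.sum_mul]
  refine Finset.sum_le_sum fun j hj => ?_
  have hxi : x i ^ 2 ≤ sqSum N x :=
    Finset.single_le_sum (f := fun i => x i ^ 2) (fun _ _ => sq_nonneg _) hi
  have hxj : x j ^ 2 ≤ sqSum N x :=
    Finset.single_le_sum (f := fun i => x i ^ 2) (fun _ _ => sq_nonneg _) hj
  have h : |x i * x j| ≤ sqSum N x := by
    rw [abs_le]
    constructor <;> nlinarith [sq_nonneg (x i + x j), sq_nonneg (x i - x j)]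
  calc P i j * x i * x j ≤ |P i j * (x i * x j)| := by rw [mul_assoc]; exact le_abs_self _
    _ = |P i j| * |x i * x j| := abs_mul _ _
    _ ≤ _ := mul_le_mul_of_nonneg_left h (abs_nonneg _)

/-- For symmetric `P`, the symmetrized product `P A + Aᵀ P` has quadratic form `2 x ⬝ P A x`. -/
lemma dotProduct_symmetrized {ι : Type*} [Fintype ι] (P A : Matrix ι ι ℝ) (hP : P.IsSymm)
    (x : ι → ℝ) :
    x ⬝ᵥ ((P * A + Aᵀ * P) *ᵥ x) = 2 * (x ⬝ᵥ (P *ᵥ (A *ᵥ x))) := by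
  have h : x ⬝ᵥ ((Aᵀ * P) *ᵥ x) = x ⬝ᵥ (P *ᵥ (A *ᵥ x)) := by
    rw [← mulVec_mulVec, mulVec_transpose, dotProduct_comm, ← dotProduct_mulVec,
      dotProduct_mulVec x P, ← mulVec_transpose, hP.eq]
  rw [add_mulVec, dotProduct_add, h, ← mulVec_mulVec]
  ring

lemma isSymm_symmetrized {ι : Type*} [Fintype ι] (P A : Matrix ι ι ℝ) (hP : P.IsSymm) :
    (P * A + Aᵀ * P).IsSymm := by
  unfold Matrix.IsSymm
  rw [transpose_add, transpose_mul, transpose_mul, transpose_transpose, hP.eq, add_comm]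

lemma DtildeC_transpose (n : ℕ) : (DtildeC n)ᵀ = DtildeC n := by
  simp [DtildeC, transpose_sub]

lemma DtildeC_mulVec (n : ℕ) (x : ℕ → ℝ) :
    DtildeC n *ᵥ (fun i : Fin (n - 1) => x i) =
      fun i : Fin (n - 1) => ((i : ℕ) + 1 / 2 : ℝ) * x i := by
  funext i
  simp only [DtildeC, sub_mulVec, mulVec_diagonal, smul_mulVec, one_mulVec, Pi.sub_apply,
    Pi.smul_apply, smul_eq_mul]
  ring

lemma ctrlMatrix_mulVec (n : ℕ) (φd k : ℕ → ℝ → ℝ) (s : ℝ) (x : ℕ → ℝ) (i : Fin (n - 1)) :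
    (ctrlMatrix n φd k s *ᵥ fun i : Fin (n - 1) => x i) i =
      if (i : ℕ) = n - 2 then -lin (fun j => k (j + 2) s) (n - 1) x
      else φd ((i : ℕ) + 1) s * x ((i : ℕ) + 1) := by
  have hi := i.2
  simp only [ctrlMatrix, mulVec, dotProduct, Matrix.of_apply]
  split_ifs with h
  · simp only [neg_mul, Finset.sum_neg_distrib, lin]
    rw [← Fin.sum_univ_eq_sum_range (fun j => k (j + 2) s * x j)]
  · rw [Finset.sum_eq_single (⟨(i : ℕ) + 1, by omega⟩ : Fin (n - 1))]
    · simp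
    · intro j _ hj
      rw [if_neg, zero_mul]
      exact fun h' => hj (Fin.ext h')
    · simp

/-- existence of solutions to the controller-context coupled Lyapunov inequalities
(in the Loewner order, `X ⪯ Y` iff `Y − X` is positive semidefinite) together with controller
gain functions `k₂,…,k_n`. -/
theorem controller_coupled_lyapunov_inequalities (n : ℕ) (hn : 3 ≤ n) (σ : ℝ) (hσ : 0 < σ)
    (φd : ℕ → ℝ → ℝ)
    (hφcont : ∀ i, i < n - 1 → Continuous (φd i))
    (hA1 : ∀ i, i < n - 1 → ∀ s, σ ≤ φd i s)
    (ρub ρlb : ℕ → ℝ)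
    (hρ : ∀ i, 2 ≤ i → i < n - 1 → 0 < ρub i ∧ 0 < ρlb i ∧
      ∀ s, ρub i * φd (i - 1) s ≤ φd i s ∧ φd i s ≤ ρlb i * φd (i - 1) s) :
    ∃ (P : Matrix (Fin (n - 1)) (Fin (n - 1)) ℝ) (νc νcl νch : ℝ)
      (k : ℕ → ℝ → ℝ),
      P.PosDef ∧ P.IsSymm ∧
      0 < νc ∧ 0 < νcl ∧ 0 < νch ∧
      (∀ i, 2 ≤ i → i ≤ n → Continuous (k i)) ∧
      ∀ s : ℝ,
        ((-(νc * φd 1 s)) • (1 : Matrix (Fin (n - 1)) (Fin (n - 1)) ℝ) -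
            (P * ctrlMatrix n φd k s + (ctrlMatrix n φd k s)ᵀ * P)).PosSemidef ∧
        (P * DtildeC n + DtildeC n * P -
            νcl • (1 : Matrix (Fin (n - 1)) (Fin (n - 1)) ℝ)).PosSemidef ∧
        (νch • (1 : Matrix (Fin (n - 1)) (Fin (n - 1)) ℝ) -
            (P * DtildeC n + DtildeC n * P)).PosSemidef := by
  have h1 : ∀ s, 0 < φd 1 s := fun s => hσ.trans_le (hA1 1 (by omega) s)
  choose c C hc hC hcC using exists_ratio_bounds n φd ρub ρlb hρ
  -- The last factor of the chain is free, as it multiplies the feedback; `φ_{(2,3)}` is used.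
  set f : ℕ → ℝ → ℝ := fun j s => if j < n - 2 then φd (j + 1) s else φd 1 s with hf
  have hf0 : ∀ s, f 0 s = φd 1 s := fun s => by simp [hf]
  obtain ⟨p, g, ε, ν, K, hε, hν, hK, hsymm, hpos, hD, hA⟩ :=
    backstepping f (fun j => if j < n - 2 then c j else 1) (fun j => if j < n - 2 then C j else 1)
      (fun s => by rw [hf0]; exact h1 s)
      (fun j => by split_ifs <;> simp [hc])
      (fun j s => by
        rw [hf0]
        by_cases h : j < n - 2
        · simpa [hf, h] using (hcC j h s).1
        · simp [hf, h])
      (fun j s => by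
        rw [hf0]
        by_cases h : j < n - 2
        · simpa [hf, h] using (hcC j h s).2
        · simp [hf, h]) (n - 1)
  set P : Matrix (Fin (n - 1)) (Fin (n - 1)) ℝ := Matrix.of fun i j => p i j with hPdef
  have hP : P.IsSymm := by
    ext i j
    exact hsymm _ _
  set k : ℕ → ℝ → ℝ := fun i s => g (i - 2) * φd 1 s with hk
  -- A vector is extended to a sequence whose entry `n - 1` is the feedback, so that `z = 0`.
  have hext : ∀ x : Fin (n - 1) → ℝ, ∃ y : ℕ → ℝ, x = (fun i : Fin (n - 1) => y i) ∧
      y (n - 1) + lin g (n - 1) y = 0 := by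
    intro x
    set y0 : ℕ → ℝ := fun i => if h : i < n - 1 then x ⟨i, h⟩ else 0 with hy0
    refine ⟨fun i => if i < n - 1 then y0 i else -lin g (n - 1) y0, ?_, ?_⟩
    · funext i
      simp [hy0]
    · have : lin g (n - 1) (fun i => if i < n - 1 then y0 i else -lin g (n - 1) y0) =
          lin g (n - 1) y0 :=
        Finset.sum_congr rfl fun i hi => by
          simp only [if_pos (Finset.mem_range.1 hi)]
      rw [this]
      simp
  set B := ∑ i ∈ Finset.range (n - 1), ∑ j ∈ Finset.range (n - 1),
    |p i j * ((j : ℝ) + 1 / 2)| with hB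
  have hB0 : 0 ≤ B := Finset.sum_nonneg fun _ _ => Finset.sum_nonneg fun _ _ => abs_nonneg _
  have hDs : (P * DtildeC n + DtildeC n * P).IsSymm := by
    have := isSymm_symmetrized P (DtildeC n) hP
    rwa [DtildeC_transpose] at this
  have hDq : ∀ y : ℕ → ℝ, (fun i : Fin (n - 1) => y i) ⬝ᵥ
      ((P * DtildeC n + DtildeC n * P) *ᵥ fun i : Fin (n - 1) => y i) =
      2 * bilin p (n - 1) y (fun j => ((j : ℝ) + 1 / 2) * y j) := by
    intro y
    have := dotProduct_symmetrized P (DtildeC n) hP (fun i : Fin (n - 1) => y i)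
    rw [DtildeC_transpose] at this
    rw [this, DtildeC_mulVec]
    congr 1
    exact dotProduct_eq_bilin p (n - 1) y (fun j => ((j : ℝ) + 1 / 2) * y j)
  have hscal : ∀ (a : ℝ) (y : ℕ → ℝ), (fun i : Fin (n - 1) => y i) ⬝ᵥ
      ((a • (1 : Matrix (Fin (n - 1)) (Fin (n - 1)) ℝ)) *ᵥ fun i : Fin (n - 1) => y i) =
      a * sqSum (n - 1) y := by
    intro a y
    rw [smul_mulVec, one_mulVec, dotProduct_smul, dotProduct_self_eq_sqSum, smul_eq_mul]
  have hscals : ∀ a : ℝ, (a • (1 : Matrix (Fin (n - 1)) (Fin (n - 1)) ℝ)).IsSymm :=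
    fun a => by simp [Matrix.IsSymm]
  have hherm : ∀ X : Matrix (Fin (n - 1)) (Fin (n - 1)) ℝ, X.IsSymm → X.IsHermitian :=
    fun X hX => by rw [Matrix.IsHermitian, conjTranspose_eq_transpose_of_trivial, hX.eq]
  refine ⟨P, 2 * ν, 2 * ε, 2 * B + 1, k, ?_, hP, by positivity, by positivity, by positivity,
    fun i _ _ => continuous_const.mul (hφcont 1 (by omega)), fun s => ⟨?_, ?_, ?_⟩⟩
  · refine Matrix.PosDef.of_dotProduct_mulVec_pos (hherm _ hP) ?_
    intro x hx
    obtain ⟨y, rfl, -⟩ := hext x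
    have hy : 0 < sqSum (n - 1) y := by
      rw [← dotProduct_self_eq_sqSum]
      refine lt_of_le_of_ne ?_ (fun h => hx (dotProduct_self_eq_zero.1 h.symm))
      rw [dotProduct_self_eq_sqSum]
      exact sqSum_nonneg _ _
    rw [star_trivial, hPdef, dotProduct_eq_bilin]
    exact (mul_pos hε hy).trans_le (hpos y)
  · refine Matrix.PosSemidef.of_dotProduct_mulVec_nonneg ?_ ?_
    · exact hherm _ ((hscals _).sub (isSymm_symmetrized P (ctrlMatrix n φd k s) hP))
    intro x
    obtain ⟨y, rfl, hy⟩ := hext x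
    rw [star_trivial, sub_mulVec, dotProduct_sub, dotProduct_symmetrized _ _ hP, hscal]
    have e : (ctrlMatrix n φd k s *ᵥ fun i : Fin (n - 1) => y i) =
        fun i : Fin (n - 1) => f i s * y ((i : ℕ) + 1) := by
      funext i
      have hi := i.2
      rw [ctrlMatrix_mulVec]
      by_cases h : (i : ℕ) = n - 2
      · have h2 : n - 2 + 1 = n - 1 := by omega
        have h3 : lin (fun j => k (j + 2) s) (n - 1) y = φd 1 s * lin g (n - 1) y := by
          unfold lin
          rw [Finset.mul_sum]
          exact Finset.sum_congr rfl fun j _ => by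
            simp only [hk, Nat.add_sub_cancel]
            ring
        simp only [hf, h, if_true, lt_irrefl, if_false, h2, h3]
        rw [eq_neg_of_add_eq_zero_left hy]
        ring
      · have h2 : (i : ℕ) < n - 2 := by omega
        simp only [hf, h, h2, if_true, if_false]
    rw [e, hPdef, dotProduct_eq_bilin p (n - 1) y fun j => f j s * y (j + 1)]
    have := hA s y
    rw [hy, hf0] at this
    linarith
  · refine Matrix.PosSemidef.of_dotProduct_mulVec_nonneg ?_ ?_
    · exact hherm _ (hDs.sub (hscals _))
    intro x
    obtain ⟨y, rfl, -⟩ := hext x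
    rw [star_trivial, sub_mulVec, dotProduct_sub, hDq, hscal]
    linarith [hD y]
  · refine Matrix.PosSemidef.of_dotProduct_mulVec_nonneg ?_ ?_
    · exact hherm _ ((hscals _).sub hDs)
    intro x
    obtain ⟨y, rfl, -⟩ := hext x
    rw [star_trivial, sub_mulVec, dotProduct_sub, hDq, hscal]
    have h2 : bilin p (n - 1) y (fun j => ((j : ℝ) + 1 / 2) * y j) ≤ B * sqSum (n - 1) y := by
      refine le_of_eq_of_le ?_ (bilin_le (fun i j => p i j * ((j : ℝ) + 1 / 2)) (n - 1) y)
      exact Finset.sum_congr rfl fun i _ => Finset.sum_congr rfl fun j _ => by ring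
    linarith [sqSum_nonneg (n - 1) y]
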